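/- Let K ⊂ {(x,y) ∈ ℝ² : 0 < x ≤ y} be a compact set and let E := {ξ ∈ ℝ^{2×2} : (λ₁(ξ), λ₂(ξ)) ∈ K}. Then E^{pc} = { ξ ∈ ℝ^{2×2} : f_θ(λ₁(ξ), λ₂(ξ)) ≤ max_{(a,b) ∈ K} f_θ(a,b) for all θ ∈ [0, max_{(a,b) ∈ K} b] }. -/

import Mathlib

open scoped BigOperators

/-- Square of the Frobenius norm of a 2×2 real matrix. -/
noncomputable def frobSq (ξ : Matrix (Fin 2) (Fin 2) ℝ) : ℝ := ∑ i, ∑ j, (ξ i j) ^ 2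

/-- The Frobenius norm of a 2×2 real matrix. -/
noncomputable def frobNorm (ξ : Matrix (Fin 2) (Fin 2) ℝ) : ℝ := Real.sqrt (frobSq ξ)

/-- The smallest singular value of a 2×2 real matrix. -/
noncomputable def lam1 (ξ : Matrix (Fin 2) (Fin 2) ℝ) : ℝ :=
  (Real.sqrt (frobSq ξ + 2 * |ξ.det|) - Real.sqrt (frobSq ξ - 2 * |ξ.det|)) / 2

/-- The largest singular value of a 2×2 real matrix. -/
noncomputable def lam2 (ξ : Matrix (Fin 2) (Fin 2) ℝ) : ℝ :=
  (Real.sqrt (frobSq ξ + 2 * |ξ.det|) + Real.sqrt (frobSq ξ - 2 * |ξ.det|)) / 2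

/-- A function on 2×2 matrices is rank one convex if it is convex along rank one segments. -/
def RankOneConvex (f : Matrix (Fin 2) (Fin 2) ℝ → ℝ) : Prop :=
  ∀ (ξ η : Matrix (Fin 2) (Fin 2) ℝ) (t : ℝ), t ∈ Set.Icc (0 : ℝ) 1 →
    (ξ - η).rank = 1 → f (t • ξ + (1 - t) • η) ≤ t * f ξ + (1 - t) * f η

/-- The rank one convex hull `E^{rc}` of a set of 2×2 matrices. -/
def rcHull (E : Set (Matrix (Fin 2) (Fin 2) ℝ)) : Set (Matrix (Fin 2) (Fin 2) ℝ) :=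
  {ξ | ∀ f : Matrix (Fin 2) (Fin 2) ℝ → ℝ,
    RankOneConvex f → (∀ η ∈ E, f η ≤ 0) → f ξ ≤ 0}

/-- The rank one convex hull `U^{rc}` of an open set of 2×2 matrices. -/
def rcHullOpen (U : Set (Matrix (Fin 2) (Fin 2) ℝ)) : Set (Matrix (Fin 2) (Fin 2) ℝ) :=
  {ξ | ∃ E : Set (Matrix (Fin 2) (Fin 2) ℝ), E ⊆ U ∧ IsCompact E ∧ ξ ∈ rcHull E}

/-- A function on 2×2 matrices is polyconvex if it is a convex function of (ξ, det ξ). -/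
def PolyconvexFun (f : Matrix (Fin 2) (Fin 2) ℝ → ℝ) : Prop :=
  ∃ g : Matrix (Fin 2) (Fin 2) ℝ × ℝ → ℝ,
    ConvexOn ℝ Set.univ g ∧ ∀ ξ, f ξ = g (ξ, ξ.det)

/-- The polyconvex hull `E^{pc}` of a set of 2×2 matrices. -/
def pcHull (E : Set (Matrix (Fin 2) (Fin 2) ℝ)) : Set (Matrix (Fin 2) (Fin 2) ℝ) :=
  {ξ | ∀ f : Matrix (Fin 2) (Fin 2) ℝ → ℝ,
    PolyconvexFun f → (∀ η ∈ E, f η ≤ 0) → f ξ ≤ 0}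

/-- The polyconvex hull `U^{pc}` of an open set of 2×2 matrices. -/
def pcHullOpen (U : Set (Matrix (Fin 2) (Fin 2) ℝ)) : Set (Matrix (Fin 2) (Fin 2) ℝ) :=
  {ξ | ∃ E : Set (Matrix (Fin 2) (Fin 2) ℝ), E ⊆ U ∧ IsCompact E ∧ ξ ∈ pcHull E}

/-- A set of 2×2 matrices is polyconvex. -/
def PolyconvexSet (A : Set (Matrix (Fin 2) (Fin 2) ℝ)) : Prop :=
  ∀ (ξ : Fin 5 → Matrix (Fin 2) (Fin 2) ℝ) (t : Fin 5 → ℝ),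
    (∀ i, ξ i ∈ A) → (∀ i, 0 ≤ t i) → (∑ i, t i) = 1 →
    (∑ i, t i * (ξ i).det) = (∑ i, t i • ξ i).det →
    (∑ i, t i • ξ i) ∈ A

/-- The polyconvex hull `Pco E`: the smallest polyconvex set containing `E`. -/
def Pco (E : Set (Matrix (Fin 2) (Fin 2) ℝ)) : Set (Matrix (Fin 2) (Fin 2) ℝ) :=
  ⋂₀ {A | PolyconvexSet A ∧ E ⊆ A}

/-- A set of 2×2 matrices is isotropic if it is invariant under orthogonal transformations. -/
def Isotropic (E : Set (Matrix (Fin 2) (Fin 2) ℝ)) : Prop :=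
  ∀ R S : Matrix (Fin 2) (Fin 2) ℝ, R * R.transpose = 1 → S * S.transpose = 1 → ∀ ξ ∈ E, R * ξ * S ∈ E

/-- The distance (w.r.t. the Frobenius norm) from a matrix to a set of matrices. -/
noncomputable def distE (ξ : Matrix (Fin 2) (Fin 2) ℝ) (E : Set (Matrix (Fin 2) (Fin 2) ℝ)) : ℝ :=
  sInf ((fun η => frobNorm (ξ - η)) '' E)

/-- The function `f_θ(x,y) = xy + θ(y-x)`. -/
def ftheta (θ : ℝ) (p : ℝ × ℝ) : ℝ := p.1 * p.2 + θ * (p.2 - p.1)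

/-- The gradient of a map `u : ℝ² → ℝ²` at `x`, as a 2×2 matrix. -/
noncomputable def gradMatrix (u : (Fin 2 → ℝ) → (Fin 2 → ℝ)) (x : Fin 2 → ℝ) :
    Matrix (Fin 2) (Fin 2) ℝ :=
  LinearMap.toMatrix' (fderiv ℝ u x).toLinearMap

/-!
Identify `ξ ∈ ℝ^{2×2}` with a pair `(z, w) ∈ ℂ × ℂ`, its conformal and anticonformal parts. Then
`det ξ = |z|² - |w|²`, `λ₁ = ||z| - |w||` and `λ₂ = |z| + |w|`, so a linear functional of
`(ξ, det ξ)` reads `φ z + ψ w + t det ξ`, and its maximum over the matrices with singular values `p`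
depends only on `‖φ‖`, `‖ψ‖`, `t` and `p`. Since a convex function is the supremum of its affine
minorants, these maxima alone determine the polyconvex hull of a set given by singular values. The
function `f_θ` bounds one of them from below, and sharply enough on `K`. Conversely, at each point
`p₀` every such maximum is controlled by a single `f_θ`, namely the one whose level line through
`p₀` is tangent there to that of the maximum.
-/

open Set

section Sup

variable {X α : Type*} [TopologicalSpace X] [TopologicalSpace α]

theorem le_csSup_image_of_mem_closure [ConditionallyCompleteLattice α] [ClosedIicTopology α]
    {f : X → α} (hf : Continuous f) {s : Set X} (hs : BddAbove (f '' s)) {x : X}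
    (hx : x ∈ closure s) : f x ≤ sSup (f '' s) := by
  have hub : sSup (f '' s) ∈ upperBounds (closure (f '' s)) := by
    rw [upperBounds_closure]
    exact fun _ ↦ le_csSup hs
  exact hub (mem_closure_image hf.continuousAt hx)

theorem exists_mem_closure_eq_csSup_image [ConditionallyCompleteLinearOrder α] [OrderTopology α]
    {f : X → α} (hf : Continuous f) {s : Set X} (hs : IsCompact (closure s)) (hne : s.Nonempty) :
    ∃ x ∈ closure s, f x = sSup (f '' s) := by
  have hbdd : BddAbove (f '' s) :=
    (hs.bddAbove_image hf.continuousOn).mono (image_mono subset_closure)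
  have hmem := csSup_mem_closure (hne.image f) hbdd
  rwa [← image_closure_of_isCompact hs hf.continuousOn] at hmem

end Sup

theorem exists_norm_eq_and_dual_apply_eq {V : Type*} [NormedAddCommGroup V]
    [InnerProductSpace ℝ V] [CompleteSpace V] [Nontrivial V] (φ : StrongDual ℝ V) {r : ℝ}
    (hr : 0 ≤ r) : ∃ v : V, ‖v‖ = r ∧ φ v = ‖φ‖ * r := by
  set a := (InnerProductSpace.toDual ℝ V).symm φ
  have hφ (v : V) : φ v = inner ℝ a v := InnerProductSpace.toDual_symm_apply.symm
  have ha : ‖a‖ = ‖φ‖ := LinearIsometryEquiv.norm_map _ _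
  rcases eq_or_ne a 0 with h0 | h0
  · obtain ⟨v, hv⟩ := exists_norm_eq V hr
    exact ⟨v, hv, by simp [hφ, ← ha, h0]⟩
  · have hn : ‖a‖ ≠ 0 := norm_ne_zero_iff.mpr h0
    refine ⟨(r / ‖a‖) • a, ?_, ?_⟩
    · rw [norm_smul, norm_div, norm_norm, Real.norm_of_nonneg hr, div_mul_cancel₀ _ hn]
    · rw [hφ, inner_smul_right, real_inner_self_eq_norm_sq, ← ha]
      field_simp

/-- The decomposition of a real `2 × 2` matrix into its conformal part `z` and its anticonformal
part `w`: under `ℝ² ≃ ℂ` the matrix acts as `v ↦ z * v + w * conj v`. -/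
noncomputable def conformalEquiv : Matrix (Fin 2) (Fin 2) ℝ ≃ₗ[ℝ] ℂ × ℂ where
  toFun ξ := (⟨(ξ 0 0 + ξ 1 1) / 2, (ξ 1 0 - ξ 0 1) / 2⟩,
    ⟨(ξ 0 0 - ξ 1 1) / 2, (ξ 1 0 + ξ 0 1) / 2⟩)
  invFun v := !![v.1.re + v.2.re, v.2.im - v.1.im; v.1.im + v.2.im, v.1.re - v.2.re]
  map_add' ξ η := by ext : 1 <;> apply Complex.ext <;> simp <;> ring
  map_smul' c ξ := by ext : 1 <;> apply Complex.ext <;> simp <;> ring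
  left_inv ξ := by ext i j; fin_cases i <;> fin_cases j <;> simp <;> ring
  right_inv v := by ext : 1 <;> apply Complex.ext <;> simp <;> ring

section SingularValues

variable (ξ : Matrix (Fin 2) (Fin 2) ℝ)

theorem det_eq_sq_norm_sub_sq_norm :
    ξ.det = ‖(conformalEquiv ξ).1‖ ^ 2 - ‖(conformalEquiv ξ).2‖ ^ 2 := by
  simp only [conformalEquiv, LinearEquiv.coe_mk, LinearMap.coe_mk, AddHom.coe_mk,
    Matrix.det_fin_two, Complex.sq_norm, Complex.normSq_apply]
  ring

theorem frobSq_eq_sq_norm_add_sq_norm :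
    frobSq ξ = 2 * (‖(conformalEquiv ξ).1‖ ^ 2 + ‖(conformalEquiv ξ).2‖ ^ 2) := by
  simp only [conformalEquiv, LinearEquiv.coe_mk, LinearMap.coe_mk, AddHom.coe_mk,
    frobSq, Fin.sum_univ_two, Complex.sq_norm, Complex.normSq_apply]
  ring

theorem sqrt_frobSq_add_sub_two_mul_abs_det :
    √(frobSq ξ + 2 * |ξ.det|) = 2 * max ‖(conformalEquiv ξ).1‖ ‖(conformalEquiv ξ).2‖ ∧
      √(frobSq ξ - 2 * |ξ.det|) = 2 * min ‖(conformalEquiv ξ).1‖ ‖(conformalEquiv ξ).2‖ := by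
  rw [frobSq_eq_sq_norm_add_sq_norm, det_eq_sq_norm_sub_sq_norm]
  have hp := norm_nonneg (conformalEquiv ξ).1
  have hq := norm_nonneg (conformalEquiv ξ).2
  set p := ‖(conformalEquiv ξ).1‖
  set q := ‖(conformalEquiv ξ).2‖
  have hdet : |p ^ 2 - q ^ 2| = max p q ^ 2 - min p q ^ 2 := by
    rcases le_total p q with h | h
    · rw [max_eq_right h, min_eq_left h, abs_of_nonpos (by nlinarith)]; ring
    · rw [max_eq_left h, min_eq_right h, abs_of_nonneg (by nlinarith)]
  have hsum : p ^ 2 + q ^ 2 = max p q ^ 2 + min p q ^ 2 := by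
    rcases le_total p q with h | h <;> simp [h, add_comm]
  rw [hdet, hsum]
  constructor
  · rw [← Real.sqrt_sq (by positivity : 0 ≤ 2 * max p q)]; ring_nf
  · rw [← Real.sqrt_sq (by positivity : 0 ≤ 2 * min p q)]; ring_nf

theorem lam1_eq_abs_norm_sub_norm :
    lam1 ξ = |‖(conformalEquiv ξ).1‖ - ‖(conformalEquiv ξ).2‖| := by
  obtain ⟨hmax, hmin⟩ := sqrt_frobSq_add_sub_two_mul_abs_det ξ
  rw [lam1, hmax, hmin, ← max_sub_min_eq_abs']
  ring

theorem lam2_eq_norm_add_norm :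
    lam2 ξ = ‖(conformalEquiv ξ).1‖ + ‖(conformalEquiv ξ).2‖ := by
  obtain ⟨hmax, hmin⟩ := sqrt_frobSq_add_sub_two_mul_abs_det ξ
  rw [lam2, hmax, hmin, ← mul_add, max_add_min, mul_div_cancel_left₀ _ two_ne_zero]

theorem lam1_nonneg : 0 ≤ lam1 ξ := by
  rw [lam1_eq_abs_norm_sub_norm]
  exact abs_nonneg _

theorem lam1_le_lam2 : lam1 ξ ≤ lam2 ξ := by
  rw [lam1_eq_abs_norm_sub_norm, lam2_eq_norm_add_norm]
  exact (abs_sub _ _).trans_eq (by simp only [abs_norm])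

end SingularValues

/-- The maximum of `A |z| + C |w| + t det ξ` over all matrices `ξ` with singular values `p`, where
`z` and `w` are the parts of `ξ` given by `conformalEquiv`. It is written out for
`0 ≤ p.1 ≤ p.2`. -/
noncomputable def supportFun (A C t : ℝ) (p : ℝ × ℝ) : ℝ :=
  (A + C) / 2 * p.2 + |p.1 * (t * p.2 + (A - C) / 2)|

theorem continuous_supportFun (A C t : ℝ) : Continuous (supportFun A C t) := by
  unfold supportFun
  fun_prop

theorem supportFun_swap_neg (A C t : ℝ) : supportFun C A (-t) = supportFun A C t := by
  ext p
  rw [supportFun, supportFun, ← abs_neg, add_comm C A]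
  ring_nf

theorem supportFun_eq_max (A C t : ℝ) (p : ℝ × ℝ) :
    supportFun A C t p =
      max (A * ((p.2 + p.1) / 2) + C * ((p.2 - p.1) / 2) + t * (p.1 * p.2))
        (A * ((p.2 - p.1) / 2) + C * ((p.2 + p.1) / 2) - t * (p.1 * p.2)) := by
  rw [supportFun, abs_eq_max_neg, ← max_add_add_left]
  ring_nf

theorem supportFun_lam_eq_max (A C t : ℝ) (ξ : Matrix (Fin 2) (Fin 2) ℝ) :
    supportFun A C t (lam1 ξ, lam2 ξ) =
      max (A * ‖(conformalEquiv ξ).1‖ + C * ‖(conformalEquiv ξ).2‖ + t * ξ.det)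
        (C * ‖(conformalEquiv ξ).1‖ + A * ‖(conformalEquiv ξ).2‖ - t * ξ.det) := by
  have habs (r s k : ℝ) : |(|r - s|) * k| = max ((r - s) * k) (-((r - s) * k)) := by
    rw [abs_mul, abs_abs, ← abs_mul, abs_eq_max_neg]
  rw [supportFun, lam1_eq_abs_norm_sub_norm, lam2_eq_norm_add_norm, det_eq_sq_norm_sub_sq_norm,
    habs, ← max_add_add_left]
  ring_nf

theorem polyconvexFun_supportFun_sub {A C : ℝ} (hA : 0 ≤ A) (hC : 0 ≤ C) (t c : ℝ) :
    PolyconvexFun fun ξ ↦ supportFun A C t (lam1 ξ, lam2 ξ) - c := by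
  let z : Matrix (Fin 2) (Fin 2) ℝ × ℝ →ₗ[ℝ] ℂ :=
    LinearMap.fst ℝ ℂ ℂ ∘ₗ conformalEquiv.toLinearMap ∘ₗ LinearMap.fst ℝ _ ℝ
  let w : Matrix (Fin 2) (Fin 2) ℝ × ℝ →ₗ[ℝ] ℂ :=
    LinearMap.snd ℝ ℂ ℂ ∘ₗ conformalEquiv.toLinearMap ∘ₗ LinearMap.fst ℝ _ ℝ
  let d : Matrix (Fin 2) (Fin 2) ℝ × ℝ →ₗ[ℝ] ℝ := t • LinearMap.snd ℝ _ ℝ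
  have hnorm {k : ℝ} (hk : 0 ≤ k) (L : Matrix (Fin 2) (Fin 2) ℝ × ℝ →ₗ[ℝ] ℂ) :
      ConvexOn ℝ univ fun v ↦ k * ‖L v‖ :=
    (convexOn_univ_norm.comp_linearMap L).smul hk
  have hconv : ConvexOn ℝ univ fun v ↦
      max (A * ‖z v‖ + C * ‖w v‖ + d v) (C * ‖z v‖ + A * ‖w v‖ + (-d) v) :=
    (((hnorm hA z).add (hnorm hC w)).add (d.convexOn convex_univ)).sup
      (((hnorm hC z).add (hnorm hA w)).add ((-d).convexOn convex_univ))
  exact ⟨_, hconv.add_const (-c), fun ξ ↦ congrArg (· - c) (supportFun_lam_eq_max A C t ξ)⟩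

theorem apply_add_apply_add_mul_det_le_supportFun (φ ψ : StrongDual ℝ ℂ) (t : ℝ)
    (ξ : Matrix (Fin 2) (Fin 2) ℝ) :
    φ (conformalEquiv ξ).1 + ψ (conformalEquiv ξ).2 + t * ξ.det ≤
      supportFun ‖φ‖ ‖ψ‖ t (lam1 ξ, lam2 ξ) := by
  rw [supportFun_lam_eq_max]
  refine le_max_of_le_left ?_
  gcongr
  · exact (le_abs_self _).trans (φ.le_opNorm _)
  · exact (le_abs_self _).trans (ψ.le_opNorm _)

theorem exists_lam_eq_and_apply_eq_supportFun (φ ψ : StrongDual ℝ ℂ) (t : ℝ) {p : ℝ × ℝ}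
    (hp₀ : 0 ≤ p.1) (hp : p.1 ≤ p.2) :
    ∃ ξ, (lam1 ξ, lam2 ξ) = p ∧
      φ (conformalEquiv ξ).1 + ψ (conformalEquiv ξ).2 + t * ξ.det = supportFun ‖φ‖ ‖ψ‖ t p := by
  have hattain {r s : ℝ} (hr : 0 ≤ r) (hs : 0 ≤ s) (hrs : (|r - s|, r + s) = p) :
      ∃ ξ, (lam1 ξ, lam2 ξ) = p ∧ φ (conformalEquiv ξ).1 + ψ (conformalEquiv ξ).2 + t * ξ.det =
        ‖φ‖ * r + ‖ψ‖ * s + t * (r ^ 2 - s ^ 2) := by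
    obtain ⟨z, hz, hφz⟩ := exists_norm_eq_and_dual_apply_eq φ hr
    obtain ⟨w, hw, hψw⟩ := exists_norm_eq_and_dual_apply_eq ψ hs
    refine ⟨conformalEquiv.symm (z, w), ?_, ?_⟩
    · rw [lam1_eq_abs_norm_sub_norm, lam2_eq_norm_add_norm, LinearEquiv.apply_symm_apply, hz, hw,
        hrs]
    · rw [det_eq_sq_norm_sub_sq_norm, LinearEquiv.apply_symm_apply, hz, hw, hφz, hψw]
  have hlarge : 0 ≤ (p.2 + p.1) / 2 := by linarith
  have hsmall : 0 ≤ (p.2 - p.1) / 2 := by linarith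
  have habs : |(p.2 + p.1) / 2 - (p.2 - p.1) / 2| = p.1 := by
    ring_nf
    exact abs_of_nonneg hp₀
  rw [supportFun_eq_max]
  rcases max_choice (‖φ‖ * ((p.2 + p.1) / 2) + ‖ψ‖ * ((p.2 - p.1) / 2) + t * (p.1 * p.2))
      (‖φ‖ * ((p.2 - p.1) / 2) + ‖ψ‖ * ((p.2 + p.1) / 2) - t * (p.1 * p.2)) with h | h
  · obtain ⟨ξ, hξ, hval⟩ := hattain hlarge hsmall (Prod.ext habs (by ring))
    exact ⟨ξ, hξ, by rw [hval, h]; ring⟩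
  · obtain ⟨ξ, hξ, hval⟩ := hattain hsmall hlarge (Prod.ext (by rwa [abs_sub_comm]) (by ring))
    exact ⟨ξ, hξ, by rw [hval, h]; ring⟩

theorem PolyconvexFun.exists_affine_le_of_lt {f : Matrix (Fin 2) (Fin 2) ℝ → ℝ}
    (hf : PolyconvexFun f) {ξ : Matrix (Fin 2) (Fin 2) ℝ} {a : ℝ} (ha : a < f ξ) :
    ∃ (φ ψ : StrongDual ℝ ℂ) (t c : ℝ),
      (∀ η, φ (conformalEquiv η).1 + ψ (conformalEquiv η).2 + t * η.det + c ≤ f η) ∧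
      φ (conformalEquiv ξ).1 + ψ (conformalEquiv ξ).2 + t * ξ.det + c = a := by
  obtain ⟨g, hg, hfg⟩ := hf
  let e : ((ℂ × ℂ) × ℝ) ≃ₗ[ℝ] Matrix (Fin 2) (Fin 2) ℝ × ℝ :=
    conformalEquiv.symm.prodCongr (LinearEquiv.refl ℝ ℝ)
  have he (η : Matrix (Fin 2) (Fin 2) ℝ) : (g ∘ e) (conformalEquiv η, η.det) = f η := by
    simp [e, hfg]
  have hconv : ConvexOn ℝ univ (g ∘ e) := hg.comp_linearMap e.toLinearMap
  have hcont : ContinuousOn (g ∘ e) univ := hconv.continuousOn isOpen_univ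
  obtain ⟨ℓ, c, hle, heq⟩ := hconv.exists_affine_le_of_lt (𝕜 := ℝ)
    (mem_univ (conformalEquiv ξ, ξ.det)) (ha.trans_eq (he ξ).symm) isClosed_univ
    hcont.lowerSemicontinuousOn
  have hsplit (z w : ℂ) (d : ℝ) : ℓ ((z, 0), 0) + ℓ ((0, w), 0) + ℓ (0, 1) * d = ℓ ((z, w), d) := by
    rw [mul_comm, ← smul_eq_mul, ← map_smul, ← map_add, ← map_add]
    simp
  refine ⟨ℓ ∘L .inl ℝ _ ℝ ∘L .inl ℝ ℂ ℂ, ℓ ∘L .inl ℝ _ ℝ ∘L .inr ℝ ℂ ℂ, ℓ (0, 1), c,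
    fun η ↦ ?_, ?_⟩
  · rw [← he η]
    exact (congrArg (· + c) (hsplit _ _ _)).trans_le (hle ⟨_, mem_univ _⟩)
  · exact (congrArg (· + c) (hsplit _ _ _)).trans heq

theorem mem_pcHull_setOf_lam_iff {K : Set (ℝ × ℝ)} (hK : ∀ p ∈ K, 0 ≤ p.1 ∧ p.1 ≤ p.2)
    {ξ : Matrix (Fin 2) (Fin 2) ℝ} :
    ξ ∈ pcHull {η | (lam1 η, lam2 η) ∈ K} ↔
      ∀ A C t c : ℝ, 0 ≤ A → 0 ≤ C → (∀ p ∈ K, supportFun A C t p ≤ c) →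
        supportFun A C t (lam1 ξ, lam2 ξ) ≤ c := by
  constructor
  · intro hξ A C t c hA hC hle
    exact sub_nonpos.mp (hξ _ (polyconvexFun_supportFun_sub hA hC t c)
      fun η hη ↦ sub_nonpos.mpr (hle _ hη))
  · intro hξ f hf hfK
    refine le_of_forall_lt_imp_le_of_dense fun a ha ↦ ?_
    obtain ⟨φ, ψ, t, c, hle, heq⟩ := hf.exists_affine_le_of_lt ha
    have hsupp : supportFun ‖φ‖ ‖ψ‖ t (lam1 ξ, lam2 ξ) ≤ -c := by
      refine hξ _ _ _ _ (norm_nonneg φ) (norm_nonneg ψ) fun p hp ↦ ?_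
      obtain ⟨η, rfl, hval⟩ := exists_lam_eq_and_apply_eq_supportFun φ ψ t (hK p hp).1 (hK p hp).2
      linarith [hle η, hfK η hp]
    linarith [apply_add_apply_add_mul_det_le_supportFun φ ψ t ξ]

section Ftheta

variable {θ : ℝ} {p : ℝ × ℝ}

theorem continuous_ftheta (θ : ℝ) : Continuous (ftheta θ) := by
  unfold ftheta
  fun_prop

theorem ftheta_sub_sq (θ : ℝ) (p : ℝ × ℝ) : ftheta θ p - θ ^ 2 = (p.2 - θ) * (p.1 + θ) := by
  rw [ftheta]
  ring

theorem ftheta_le_sq_iff (hθ : 0 < θ) (hp : 0 ≤ p.1) : ftheta θ p ≤ θ ^ 2 ↔ p.2 ≤ θ := by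
  rw [← not_lt, ← not_lt, not_iff_not, ← sub_pos, ftheta_sub_sq,
    mul_pos_iff_of_pos_right (by positivity), sub_pos]

theorem sq_le_ftheta (hθ : 0 ≤ θ) (hp₀ : 0 ≤ p.1) (hp : θ ≤ p.2) : θ ^ 2 ≤ ftheta θ p := by
  rw [← sub_nonneg, ftheta_sub_sq]
  exact mul_nonneg (sub_nonneg.mpr hp) (add_nonneg hp₀ hθ)

theorem le_snd_of_sq_le_ftheta (hθ : 0 < θ) (hp : 0 ≤ p.1) (h : θ ^ 2 ≤ ftheta θ p) : θ ≤ p.2 := by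
  rw [← sub_nonneg, ftheta_sub_sq] at h
  exact sub_nonneg.mp (nonneg_of_mul_nonneg_left h (by positivity))

theorem ftheta_le_supportFun (θ : ℝ) (p : ℝ × ℝ) : ftheta θ p ≤ supportFun 0 (2 * θ) 1 p := by
  rw [supportFun_eq_max, ftheta]
  exact le_max_of_le_left (by linarith)

theorem supportFun_le_max_ftheta_sq (hp₀ : 0 ≤ p.1) (hp : p.1 ≤ p.2) :
    supportFun 0 (2 * θ) 1 p ≤ max (ftheta θ p) (θ ^ 2) := by
  rw [supportFun_eq_max, ftheta]
  refine max_le (le_max_of_le_left (by linarith)) ?_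
  rcases le_total θ p.2 with h | h
  · exact le_max_of_le_left (by nlinarith)
  · exact le_max_of_le_right (by nlinarith)

end Ftheta

section Tangent

variable {A C t x y θ : ℝ}

/- The gradients at `(x, y)` of `f_θ` and of the active branch of `supportFun A C t` are
`(y - θ, x + θ)` and `(t y + (A - C) / 2, t x + (A + C) / 2)`; the equation makes them parallel. -/
theorem exists_tangent_ftheta (hA : 0 ≤ A) (hC : 0 ≤ C) (hx : 0 < x) (hxy : x ≤ y)
    (hσ : 0 < t * y + (A - C) / 2) :
    ∃ θ, 0 ≤ θ ∧ θ < y ∧ (y - θ) * (t * x + (A + C) / 2) = (x + θ) * (t * y + (A - C) / 2) ∧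
      t * θ ≤ (A + C) / 2 ∧ 0 ≤ t * θ + (A - C) / 2 := by
  set σ := t * y + (A - C) / 2 with hσ_def
  set τ := t * x + (A + C) / 2 with hτ_def
  have hτ : 0 < τ := by
    rcases le_or_gt t 0 with ht | ht
    · nlinarith
    · positivity
  have hxσ : x * σ ≤ y * τ := by
    nlinarith
  have hθ : (y * τ - x * σ) / (σ + τ) * (σ + τ) = y * τ - x * σ :=
    div_mul_cancel₀ _ (by positivity)
  refine ⟨(y * τ - x * σ) / (σ + τ), ?_, ?_, by linear_combination -hθ, ?_, ?_⟩
  · exact div_nonneg (sub_nonneg.mpr hxσ) (by positivity)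
  · rw [div_lt_iff₀ (by positivity)]
    nlinarith
  · refine le_of_mul_le_mul_right ?_ (by positivity : 0 < σ + τ)
    have : (A + C) / 2 * (σ + τ) - t * (y * τ - x * σ) = A * τ := by
      rw [hσ_def, hτ_def]; ring
    nlinarith [mul_nonneg hA hτ.le]
  · refine nonneg_of_mul_nonneg_left ?_ (by positivity : 0 < σ + τ)
    have : t * (y * τ - x * σ) + (A - C) / 2 * (σ + τ) = A * σ := by
      rw [hσ_def, hτ_def]; ring
    nlinarith [mul_nonneg hA hσ.le]

theorem supportFun_le_of_ftheta_le_of_tangent (hC : 0 ≤ C) (hx : 0 < x) (hxy : x ≤ y)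
    (hσ : 0 < t * y + (A - C) / 2) (hθ : 0 ≤ θ) (hθy : θ < y)
    (htan : (y - θ) * (t * x + (A + C) / 2) = (x + θ) * (t * y + (A - C) / 2))
    (hcurv : t * θ ≤ (A + C) / 2) (hsign : 0 ≤ t * θ + (A - C) / 2) {p : ℝ × ℝ} (hp : 0 ≤ p.1)
    (hle : ftheta θ (x, y) ≤ ftheta θ p) : supportFun A C t (x, y) ≤ supportFun A C t p := by
  obtain ⟨a, b⟩ := p
  have hθb : θ < b := by
    have hpos : 0 < (b - θ) * (a + θ) := by
      rw [← ftheta_sub_sq θ (a, b)]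
      refine lt_of_lt_of_le ?_ (sub_le_sub_right hle _)
      rw [ftheta_sub_sq]
      exact mul_pos (sub_pos.mpr hθy) (by positivity)
    exact sub_pos.mp (pos_of_mul_pos_left hpos (by positivity))
  simp only [supportFun, ftheta] at hp hle ⊢
  rw [abs_of_pos (mul_pos hx hσ)]
  rcases le_or_gt 0 (t * b + (A - C) / 2) with hb | hb
  · rw [abs_of_nonneg (mul_nonneg hp hb)]
    have hid : (b - θ) * (((A + C) / 2 * b + a * (t * b + (A - C) / 2)) -
          ((A + C) / 2 * y + x * (t * y + (A - C) / 2))) =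
        (t * b + (A - C) / 2) * ((a * b + θ * (b - a)) - (x * y + θ * (y - x))) +
          ((A + C) / 2 - t * θ) * (b - y) ^ 2 := by
      linear_combination (b - y) * htan
    refine sub_nonneg.mp (nonneg_of_mul_nonneg_right ?_ (sub_pos.mpr hθb))
    rw [hid]
    exact add_nonneg (mul_nonneg hb (sub_nonneg.mpr hle))
      (mul_nonneg (sub_nonneg.mpr hcurv) (sq_nonneg _))
  · have ht : t < 0 := by nlinarith
    have hyb : y < b := by nlinarith
    calc (A + C) / 2 * y + x * (t * y + (A - C) / 2)
        ≤ (A + C) / 2 * y + x * (-t * (b - y)) := by gcongr; linarith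
      _ ≤ (A + C) / 2 * y + y * (-t * (b - y)) := by
          have : 0 ≤ -t * (b - y) := mul_nonneg (by linarith) (by linarith)
          gcongr
      _ = (A + C) / 2 * y + (-t * y) * (b - y) := by ring
      _ ≤ (A + C) / 2 * y + (A + C) / 2 * (b - y) := by gcongr; linarith
      _ = (A + C) / 2 * b := by ring
      _ ≤ (A + C) / 2 * b + |a * (t * b + (A - C) / 2)| := le_add_of_nonneg_right (abs_nonneg _)

theorem exists_forall_supportFun_le_of_ftheta_le (hA : 0 ≤ A) (hC : 0 ≤ C) (hx : 0 ≤ x)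
    (hxy : x ≤ y) :
    ∃ θ ∈ Icc 0 y, ∀ p : ℝ × ℝ, 0 ≤ p.1 → p.1 ≤ p.2 → ftheta θ (x, y) ≤ ftheta θ p →
      supportFun A C t (x, y) ≤ supportFun A C t p := by
  wlog hσ : 0 ≤ t * y + (A - C) / 2 generalizing A C t
  · simpa only [supportFun_swap_neg] using this hC hA (t := -t) (by linarith)
  rcases (mul_nonneg hx hσ).eq_or_lt with hflat | hpos
  · refine ⟨y, ⟨hx.trans hxy, le_rfl⟩, fun p hp₀ hp hle ↦ ?_⟩
    have hyp : y ≤ p.2 := by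
      rcases (hx.trans hxy).eq_or_lt with rfl | hy
      · exact hp₀.trans hp
      · exact le_snd_of_sq_le_ftheta hy hp₀ ((sq_le_ftheta hy.le hx le_rfl).trans hle)
    rw [supportFun, supportFun, ← hflat, abs_zero, add_zero]
    exact le_add_of_le_of_nonneg (by gcongr) (abs_nonneg _)
  · have hx' : 0 < x := pos_of_mul_pos_left hpos hσ
    have hσ' : 0 < t * y + (A - C) / 2 := pos_of_mul_pos_right hpos hx
    obtain ⟨θ, hθ, hθy, htan, hcurv, hsign⟩ := exists_tangent_ftheta hA hC hx' hxy hσ'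
    exact ⟨θ, ⟨hθ, hθy.le⟩, fun p hp₀ _ ↦
      supportFun_le_of_ftheta_le_of_tangent hC hx' hxy hσ' hθ hθy htan hcurv hsign hp₀⟩

end Tangent

section Hull

variable {K : Set (ℝ × ℝ)}

theorem supportFun_le_csSup_ftheta (hKc : IsCompact (closure K)) (hne : K.Nonempty)
    (hK : ∀ p ∈ closure K, 0 ≤ p.1 ∧ p.1 ≤ p.2) {θ : ℝ} (hθ : 0 ≤ θ)
    (hθK : θ ≤ sSup (Prod.snd '' K)) {p : ℝ × ℝ} (hp : p ∈ closure K) :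
    supportFun 0 (2 * θ) 1 p ≤ sSup (ftheta θ '' K) := by
  have hle {q : ℝ × ℝ} (hq : q ∈ closure K) : ftheta θ q ≤ sSup (ftheta θ '' K) :=
    le_csSup_image_of_mem_closure (continuous_ftheta θ)
      ((hKc.bddAbove_image (continuous_ftheta θ).continuousOn).mono (image_mono subset_closure)) hq
  obtain ⟨q, hq, hqmax⟩ := exists_mem_closure_eq_csSup_image continuous_snd hKc hne
  have hsq : θ ^ 2 ≤ sSup (ftheta θ '' K) :=
    (sq_le_ftheta hθ (hK q hq).1 (hθK.trans_eq hqmax.symm)).trans (hle hq)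
  exact (supportFun_le_max_ftheta_sq (hK p hp).1 (hK p hp).2).trans (max_le (hle hp) hsq)

theorem snd_le_csSup_of_ftheta_le (hKb : BddAbove (Prod.snd '' K)) (hne : K.Nonempty)
    (hK : ∀ p ∈ K, 0 ≤ p.1) (hpos : 0 < sSup (Prod.snd '' K)) {p : ℝ × ℝ} (hp : 0 ≤ p.1)
    (hle : ftheta (sSup (Prod.snd '' K)) p ≤ sSup (ftheta (sSup (Prod.snd '' K)) '' K)) :
    p.2 ≤ sSup (Prod.snd '' K) := by
  rw [← ftheta_le_sq_iff hpos hp]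
  refine hle.trans (csSup_le (hne.image _) ?_)
  rintro _ ⟨q, hq, rfl⟩
  exact (ftheta_le_sq_iff hpos (hK q hq)).mpr (le_csSup hKb (mem_image_of_mem _ hq))

theorem supportFun_le_of_forall_ftheta_le_csSup (hKc : IsCompact (closure K)) (hne : K.Nonempty)
    (hK : ∀ p ∈ closure K, 0 ≤ p.1 ∧ p.1 ≤ p.2) {A C t c : ℝ} (hA : 0 ≤ A) (hC : 0 ≤ C)
    (hc : ∀ p ∈ K, supportFun A C t p ≤ c) {p : ℝ × ℝ} (hp₀ : 0 ≤ p.1) (hp : p.1 ≤ p.2)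
    (hle : ∀ θ ∈ Icc 0 p.2, ftheta θ p ≤ sSup (ftheta θ '' K)) : supportFun A C t p ≤ c := by
  obtain ⟨θ, hθ, himp⟩ := exists_forall_supportFun_le_of_ftheta_le (t := t) hA hC hp₀ hp
  obtain ⟨q, hq, hqmax⟩ := exists_mem_closure_eq_csSup_image (continuous_ftheta θ) hKc hne
  have hcq : supportFun A C t q ≤ c :=
    closure_minimal hc (isClosed_le (continuous_supportFun A C t) continuous_const) hq
  exact (himp q (hK q hq).1 (hK q hq).2 ((hle θ hθ).trans_eq hqmax.symm)).trans hcq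

end Hull

theorem pcHull_characterization_general {K : Set (ℝ × ℝ)} (hKb : Bornology.IsBounded K)
    (hKsub : K ⊆ {p : ℝ × ℝ | 0 ≤ p.1 ∧ p.1 ≤ p.2}) (hKpos : ∃ p ∈ K, 0 < p.2) :
    pcHull {ξ | (lam1 ξ, lam2 ξ) ∈ K} = {ξ | ∀ θ ∈ Set.Icc (0 : ℝ) (sSup (Prod.snd '' K)),
      ftheta θ (lam1 ξ, lam2 ξ) ≤ sSup (ftheta θ '' K)} := by
  obtain ⟨p, hp, hp2⟩ := hKpos
  have hne : K.Nonempty := ⟨p, hp⟩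
  have hKc : IsCompact (closure K) := hKb.isCompact_closure
  have hK : ∀ q ∈ closure K, 0 ≤ q.1 ∧ q.1 ≤ q.2 :=
    closure_minimal hKsub <| (isClosed_le continuous_const continuous_fst).inter
      (isClosed_le continuous_fst continuous_snd)
  have hbdd : BddAbove (Prod.snd '' K) :=
    (hKc.bddAbove_image continuous_snd.continuousOn).mono (image_mono subset_closure)
  have hpos : 0 < sSup (Prod.snd '' K) := hp2.trans_le (le_csSup hbdd (mem_image_of_mem _ hp))
  ext ξ
  rw [mem_pcHull_setOf_lam_iff hKsub]
  refine ⟨fun h θ hθ ↦ ?_, fun h A C t c hA hC hc ↦ ?_⟩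
  · exact (ftheta_le_supportFun θ _).trans (h 0 (2 * θ) 1 _ le_rfl (mul_nonneg zero_le_two hθ.1)
      fun q hq ↦ supportFun_le_csSup_ftheta hKc hne hK hθ.1 hθ.2 (subset_closure hq))
  · have hlam2 : lam2 ξ ≤ sSup (Prod.snd '' K) := snd_le_csSup_of_ftheta_le hbdd hne
      (fun q hq ↦ (hKsub hq).1) hpos (lam1_nonneg ξ) (h _ ⟨hpos.le, le_rfl⟩)
    exact supportFun_le_of_forall_ftheta_le_csSup hKc hne hK hA hC hc (lam1_nonneg ξ)
      (lam1_le_lam2 ξ) fun θ hθ ↦ h θ ⟨hθ.1, hθ.2.trans hlam2⟩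

/-- characterization of `E^{pc}` via the functions `f_θ`. -/
theorem pcHull_characterization (K : Set (ℝ × ℝ)) (hKc : IsCompact K) (hKne : K.Nonempty)
    (hKsub : K ⊆ {p : ℝ × ℝ | 0 < p.1 ∧ p.1 ≤ p.2})
    (E : Set (Matrix (Fin 2) (Fin 2) ℝ)) (hE : E = {ξ | (lam1 ξ, lam2 ξ) ∈ K}) :
    pcHull E = {ξ | ∀ θ ∈ Set.Icc (0 : ℝ) (sSup (Prod.snd '' K)),
      ftheta θ (lam1 ξ, lam2 ξ) ≤ sSup (ftheta θ '' K)} := by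
  subst hE
  obtain ⟨p, hp⟩ := hKne
  have hp_pos : 0 < p.2 := (hKsub hp).1.trans_le (hKsub hp).2
  exact pcHull_characterization_general hKc.isBounded (fun q hq ↦ ⟨(hKsub hq).1.le, (hKsub hq).2⟩)
    ⟨p, hp, hp_pos⟩
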